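/- arXiv:1101.4374 — 2 statements merged into one kernel-verified Lean document; each statement's English description precedes it below -/
import Mathlib

section
/- Suppose x_C ≥ 0 is the smallest real number with det C(x_C) = 0 (all α_i(x_C) being finite). Then x_C ≥ r(φ_{G,f,w}). -/
/-! The generating function already diverges at `x_C`; as its terms are nondecreasing in `x`, it
diverges at every larger `x` too, and `r(φ) ≤ x_C` follows. Note that `x_C > 0`, because
`C(0) = -1`.

Suppose `φ(x) < ∞` at `x = x_C`. Let `h(v)` (`hitGen`) be the generating function of the paths from
`v` that visit `w` only at their end. Splitting off the initial vertex gives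
`x^{f(v)} ∑_{v → v'} h(v') ≤ h(v)` for `v ≠ w`, and `x^{f(w)} ∑_{w → v'} h(v') ≤ φ(x)`
(`hitGen_step`, `phi_step`). By strong connectedness `h` is everywhere positive and all its
successor sums are finite (`hitGen_pos`, `succ_sum_ne_top`). Summing over classes,
`R_i = ∑_{v ∈ V_i} h(v)` is a positive finite vector with `∑_j α_{ij} R_j ≤ R_i` for `i ≠ 0`.

Since `det C(x) = 0`, the matrix `(α_{ij})_{1 ≤ i,j ≤ ℓ}` has a left eigenvector `u ≠ 0` with
eigenvalue `1`. Extending `|u|` by zero to `U`, one has `U_j ≤ ∑_i U_i α_{ij}`. Pairing with `R`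
forces equality (`support_closed`), so the support of `U` is a nonempty set of classes which no edge
leaves. It does not contain the class `{w}`, contradicting strong connectedness. -/

open Classical Filter Topology Finset
open scoped ENNReal

universe u

variable {V : Type u}

/-- A walk with `n` edges in the graph with edge relation `E`. -/
def IsWalk (E : V → V → Prop) (n : ℕ) (γ : Fin (n + 1) → V) : Prop :=
  ∀ k : Fin n, E (γ k.castSucc) (γ k.succ)

/-- `f*(γ)` for a path of length `n + 1`, encoded by its `n + 2` vertices:
the sum of `f` over all vertices of the path except the last one. -/
def fStar (f : V → ℝ) (n : ℕ) (γ : Fin (n + 2) → V) : ℝ :=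
  ∑ i : Fin (n + 1), f (γ i.castSucc)

/-- The set of simple `w`-cycles: paths `γ = (v_0, …, v_{n+1})` of length `n + 1 ≥ 1`
with `v_0 = v_{n+1} = w` and `v_i ≠ w` for `0 < i < n + 1`. -/
def SimpleCycle (E : V → V → Prop) (w : V) : Set (Σ n : ℕ, Fin (n + 2) → V) :=
  {p | IsWalk E (p.1 + 1) p.2 ∧ p.2 0 = w ∧ p.2 (Fin.last (p.1 + 1)) = w ∧
    ∀ i : Fin (p.1 + 2), i ≠ 0 → i ≠ Fin.last (p.1 + 1) → p.2 i ≠ w}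

/-- Paths of length `≥ 1` starting in the set `S` and ending at `w`. -/
def PathsTo (E : V → V → Prop) (S : Set V) (w : V) : Set (Σ n : ℕ, Fin (n + 2) → V) :=
  {p | IsWalk E (p.1 + 1) p.2 ∧ p.2 0 ∈ S ∧ p.2 (Fin.last (p.1 + 1)) = w}

/-- The generating function `φ_{G,f,w}(x) = ∑_{γ ∈ C(G;w)} x^{f*(γ)}`, valued in `[0,∞]`. -/
noncomputable def phi (E : V → V → Prop) (f : V → ℝ) (w : V) (x : ℝ) : ℝ≥0∞ :=
  ∑' γ : SimpleCycle E w, ENNReal.ofReal (x ^ fStar f γ.1.1 γ.1.2)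

/-- The real-valued generating function `φ_{G,f,w}(x)`. -/
noncomputable def phiR (E : V → V → Prop) (f : V → ℝ) (w : V) (x : ℝ) : ℝ :=
  ∑' γ : SimpleCycle E w, x ^ fStar f γ.1.1 γ.1.2

/-- Summability of the family `(x^{f*(γ)})_{γ ∈ C(G;w)}`. -/
def phiSummable (E : V → V → Prop) (f : V → ℝ) (w : V) (x : ℝ) : Prop :=
  Summable fun γ : SimpleCycle E w => x ^ fStar f γ.1.1 γ.1.2

/-- The radius of convergence `r(φ_{G,f,w})`. -/
noncomputable def rPhi (E : V → V → Prop) (f : V → ℝ) (w : V) : ℝ :=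
  sSup {x : ℝ | 0 ≤ x ∧ phiSummable E f w x}

/-- `A_S(x) = ∑_γ x^{f*(γ)}` over paths from `S` to `w`, valued in `[0,∞]`. -/
noncomputable def Afun (E : V → V → Prop) (f : V → ℝ) (S : Set V) (w : V) (x : ℝ) : ℝ≥0∞ :=
  ∑' γ : PathsTo E S w, ENNReal.ofReal (x ^ fStar f γ.1.1 γ.1.2)

/-- Summability of the family `(x^{f*(γ)})_γ` over paths from `S` to `w`. -/
def ASummable (E : V → V → Prop) (f : V → ℝ) (S : Set V) (w : V) (x : ℝ) : Prop :=
  Summable fun γ : PathsTo E S w => x ^ fStar f γ.1.1 γ.1.2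

/-- The radius of convergence `r(A_S)`. -/
noncomputable def rA (E : V → V → Prop) (f : V → ℝ) (S : Set V) (w : V) : ℝ :=
  sSup {x : ℝ | 0 ≤ x ∧ ASummable E f S w x}

/-- `α_S(x) = ∑_{v ∈ S} x^{f(v)}`, valued in `[0,∞]`. -/
noncomputable def alphaE (f : V → ℝ) (S : Set V) (x : ℝ) : ℝ≥0∞ :=
  ∑' v : S, ENNReal.ofReal (x ^ f v)

/-- `α_S(x) = ∑_{v ∈ S} x^{f(v)}`, as a real number (when summable). -/
noncomputable def alphaR (f : V → ℝ) (S : Set V) (x : ℝ) : ℝ :=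
  ∑' v : S, x ^ f v.1

/-- Summability of the family `(x^{f(v)})_{v ∈ V}`. -/
def FSummable (f : V → ℝ) (x : ℝ) : Prop := Summable fun v : V => x ^ f v

/-- The radius of convergence `r(F_{f,V})`. -/
noncomputable def rF (f : V → ℝ) : ℝ := sSup {x : ℝ | 0 ≤ x ∧ FSummable f x}

/-- The matrix `M(x)` with entries `α_{ij}(x) - δ_{ij}`, `1 ≤ i, j ≤ m`. -/
noncomputable def Mmat (f : V → ℝ) {m : ℕ} (P : Fin (m + 1) → Set V)
    (EH : Fin (m + 1) → Fin (m + 1) → Prop) (x : ℝ) : Matrix (Fin m) (Fin m) ℝ :=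
  fun i j =>
    (if EH i.succ j.succ then alphaR f (P i.succ) x else 0) - if i = j then 1 else 0

/-- `x̃₀`, as in the paper: `r(F_{f,V})` if `M(x)` is invertible for all
`0 ≤ x < r(F_{f,V})`, and `inf {x ∈ [0, r(F_{f,V})) : det M(x) = 0}` otherwise. -/
noncomputable def xtilde (f : V → ℝ) {m : ℕ} (P : Fin (m + 1) → Set V)
    (EH : Fin (m + 1) → Fin (m + 1) → Prop) : ℝ :=
  if ∀ x : ℝ, 0 ≤ x → x < rF f → (Mmat f P EH x).det ≠ 0 then rF f
  else sInf {x : ℝ | 0 ≤ x ∧ x < rF f ∧ (Mmat f P EH x).det = 0}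

/-- Embedding of the indices `{1, …, ℓ}` into `{0, 1, …, m}`. -/
def embl {m : ℕ} (ℓ : ℕ) (hl : ℓ ≤ m) (i : Fin ℓ) : Fin (m + 1) :=
  ⟨i.1 + 1, by have := i.isLt; omega⟩

/-- The `ℓ × ℓ` matrix `C(x)` with entries `α_{ij}(x) - δ_{ij}`, `1 ≤ i, j ≤ ℓ`. -/
noncomputable def Cmat (f : V → ℝ) {m : ℕ} (ℓ : ℕ) (hl : ℓ ≤ m) (P : Fin (m + 1) → Set V)
    (EH : Fin (m + 1) → Fin (m + 1) → Prop) (x : ℝ) : Matrix (Fin ℓ) (Fin ℓ) ℝ :=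
  fun i j =>
    (if EH (embl ℓ hl i) (embl ℓ hl j) then alphaR f (P (embl ℓ hl i)) x else 0) -
      if i = j then 1 else 0

/-- `ζ(x) = α_{ℓ+1}(x) + … + α_{m-1}(x)`. -/
noncomputable def zeta (f : V → ℝ) {m : ℕ} (ℓ : ℕ) (P : Fin (m + 1) → Set V) (x : ℝ) : ℝ :=
  ∑ k ∈ Finset.univ.filter (fun k : Fin (m + 1) => ℓ < k.1 ∧ k.1 < m), alphaR f (P k) x

/-- `F_{f,V,V_i}(x) = ∑_{ℓ+1 ≤ k ≤ m, (V_i,V_k) ∈ E(H)} α_k(x)`. -/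
noncomputable def FfVclass (f : V → ℝ) {m : ℕ} (ℓ : ℕ) (P : Fin (m + 1) → Set V)
    (EH : Fin (m + 1) → Fin (m + 1) → Prop) (i : Fin (m + 1)) (x : ℝ) : ℝ :=
  ∑ k ∈ Finset.univ.filter (fun k : Fin (m + 1) => ℓ < k.1 ∧ EH i k), alphaR f (P k) x

/-- The vector `(-α_1(x) F_{f,V,V_1}(x), …, -α_ℓ(x) F_{f,V,V_ℓ}(x))`. -/
noncomputable def uVec (f : V → ℝ) {m : ℕ} (ℓ : ℕ) (hl : ℓ ≤ m) (P : Fin (m + 1) → Set V)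
    (EH : Fin (m + 1) → Fin (m + 1) → Prop) (x : ℝ) : Fin ℓ → ℝ :=
  fun j => -(alphaR f (P (embl ℓ hl j)) x * FfVclass f ℓ P EH (embl ℓ hl j) x)

/-- The vector `(-α_{10}(x), …, -α_{ℓ0}(x))`. -/
noncomputable def aVec (f : V → ℝ) {m : ℕ} (ℓ : ℕ) (hl : ℓ ≤ m) (P : Fin (m + 1) → Set V)
    (EH : Fin (m + 1) → Fin (m + 1) → Prop) (x : ℝ) : Fin ℓ → ℝ :=
  fun j => -(if EH (embl ℓ hl j) 0 then alphaR f (P (embl ℓ hl j)) x else 0)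

/-! ### Paths first hitting `w` at their end -/

/-- The condition that a sequence of `n + 1` vertices is a path in `E` which visits `w` exactly
once, at its final vertex. In contrast to the cycles of `SimpleCycle`, the length `n` may be `0`,
so that the one-vertex path `(w)` is allowed. -/
def IsHitting (E : V → V → Prop) (w : V) (n : ℕ) (γ : Fin (n + 1) → V) : Prop :=
  IsWalk E n γ ∧ γ (Fin.last n) = w ∧ ∀ i : Fin n, γ i.castSucc ≠ w

/-- The weight `x^{f*(γ)}` of a path first hitting `w` at its end, and `0` for all other
vertex sequences. -/
noncomputable def hitWt (E : V → V → Prop) (f : V → ℝ) (w : V) (x : ℝ) (n : ℕ)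
    (γ : Fin (n + 1) → V) : ℝ≥0∞ :=
  if IsHitting E w n γ then ENNReal.ofReal (x ^ ∑ i : Fin n, f (γ i.castSucc)) else 0

/-- The generating function of the paths (of any length `≥ 0`) from `v` which first hit `w` at
their end. -/
noncomputable def hitGen (E : V → V → Prop) (f : V → ℝ) (w : V) (x : ℝ) (v : V) : ℝ≥0∞ :=
  ∑' n : ℕ, ∑' γ : Fin n → V, hitWt E f w x n (Fin.cons v γ)

lemma isWalk_cons (E : V → V → Prop) (n : ℕ) (v : V) (γ : Fin (n + 1) → V) :
    IsWalk E (n + 1) (Fin.cons v γ : Fin (n + 2) → V) ↔ E v (γ 0) ∧ IsWalk E n γ := by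
  unfold IsWalk
  rw [Fin.forall_fin_succ]
  simp

lemma isHitting_cons (E : V → V → Prop) (w : V) (n : ℕ) (v : V) (γ : Fin (n + 1) → V) :
    IsHitting E w (n + 1) (Fin.cons v γ : Fin (n + 2) → V) ↔
      v ≠ w ∧ E v (γ 0) ∧ IsHitting E w n γ := by
  unfold IsHitting
  rw [isWalk_cons, Fin.forall_fin_succ, ← Fin.succ_last]
  simp only [Fin.cons_succ, Fin.castSucc_zero, Fin.cons_zero, ← Fin.succ_castSucc]
  tauto

lemma cons_mem_simpleCycle (E : V → V → Prop) (w : V) (n : ℕ) (γ : Fin (n + 1) → V)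
    (h0 : E w (γ 0)) (h : IsHitting E w n γ) :
    (⟨n, Fin.cons w γ⟩ : Σ n : ℕ, Fin (n + 2) → V) ∈ SimpleCycle E w := by
  refine ⟨(isWalk_cons E n w γ).2 ⟨h0, h.1⟩, rfl, ?_, ?_⟩
  · change (Fin.cons w γ : Fin (n + 2) → V) (Fin.last (n + 1)) = w
    rw [← Fin.succ_last, Fin.cons_succ]
    exact h.2.1
  · intro i hi0 hil
    change Fin (n + 2) at i
    induction i using Fin.cases with
    | zero => exact absurd rfl hi0
    | succ j =>
      induction j using Fin.lastCases with
      | last => exact absurd (Fin.succ_last _) hil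
      | cast j => exact h.2.2 j

lemma ofReal_rpow_sum_cons {x : ℝ} (hx : 0 < x) (f : V → ℝ) (n : ℕ) (v : V)
    (γ : Fin (n + 1) → V) :
    ENNReal.ofReal (x ^ ∑ i : Fin (n + 1), f ((Fin.cons v γ : Fin (n + 2) → V) i.castSucc)) =
      ENNReal.ofReal (x ^ f v) * ENNReal.ofReal (x ^ ∑ i : Fin n, f (γ i.castSucc)) := by
  rw [Fin.sum_univ_succ, Real.rpow_add hx, ENNReal.ofReal_mul (Real.rpow_nonneg hx.le _)]
  simp only [Fin.castSucc_zero, Fin.cons_zero, ← Fin.succ_castSucc, Fin.cons_succ]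

lemma tsum_fin_succ (n : ℕ) (F : (Fin (n + 1) → V) → ℝ≥0∞) :
    ∑' γ, F γ = ∑' v : V, ∑' γ : Fin n → V, F (Fin.cons v γ) := by
  rw [← (Fin.consEquiv (fun _ : Fin (n + 1) => V)).tsum_eq, ENNReal.tsum_prod']
  rfl

/-- Prepending the vertex `v` to all hitting paths starting at successors of `v`. -/
lemma tsum_step (E : V → V → Prop) (f : V → ℝ) (w : V) (x : ℝ) (v : V) :
    ENNReal.ofReal (x ^ f v) * ∑' v', (if E v v' then hitGen E f w x v' else 0) =
      ∑' n : ℕ, ∑' γ : Fin (n + 1) → V,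
        if E v (γ 0) then ENNReal.ofReal (x ^ f v) * hitWt E f w x n γ else 0 := by
  simp_rw [tsum_fin_succ, Fin.cons_zero]
  rw [ENNReal.tsum_comm, ← ENNReal.tsum_mul_left]
  refine tsum_congr fun v' => ?_
  by_cases h : E v v'
  · simp only [h, if_true, hitGen, ENNReal.tsum_mul_left]
  · simp [h]

lemma hitGen_step {x : ℝ} (hx : 0 < x) (E : V → V → Prop) (f : V → ℝ) (w : V) (v : V)
    (hv : v ≠ w) :
    ENNReal.ofReal (x ^ f v) * ∑' v', (if E v v' then hitGen E f w x v' else 0) ≤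
      hitGen E f w x v := by
  rw [tsum_step]
  conv_rhs => rw [hitGen, tsum_eq_zero_add' ENNReal.summable]
  refine le_trans (le_of_eq ?_) le_add_self
  refine tsum_congr fun n => tsum_congr fun γ => ?_
  unfold hitWt
  rw [isHitting_cons, ofReal_rpow_sum_cons hx]
  by_cases h1 : E v (γ 0) <;> by_cases h2 : IsHitting E w n γ <;> simp [h1, h2, hv]

/-- Splitting off the initial vertex of a simple `w`-cycle. -/
lemma phi_step {x : ℝ} (hx : 0 < x) (E : V → V → Prop) (f : V → ℝ) (w : V) :
    ENNReal.ofReal (x ^ f w) * ∑' v', (if E w v' then hitGen E f w x v' else 0) ≤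
      phi E f w x := by
  rw [tsum_step]
  unfold phi
  rw [tsum_subtype (SimpleCycle E w)
    (fun p : Σ n : ℕ, Fin (n + 2) → V => ENNReal.ofReal (x ^ fStar f p.1 p.2)),
    ENNReal.tsum_sigma']
  refine ENNReal.tsum_le_tsum fun n => ?_
  rw [tsum_fin_succ (n + 1)]
  refine le_trans ?_ (ENNReal.le_tsum w)
  refine ENNReal.tsum_le_tsum fun γ => ?_
  unfold hitWt
  split_ifs with h1 h2
  · rw [Set.indicator_of_mem (cons_mem_simpleCycle E w n γ h1 h2)]
    exact (ofReal_rpow_sum_cons hx f n w γ).ge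
  all_goals simp

lemma hitGen_self_pos (E : V → V → Prop) (f : V → ℝ) (w : V) (x : ℝ) :
    0 < hitGen E f w x w := by
  have h : hitWt E f w x 0 (Fin.cons w Fin.elim0) = 1 := by
    have : IsHitting E w 0 (Fin.cons w Fin.elim0) :=
      ⟨fun k => k.elim0, rfl, fun k => k.elim0⟩
    simp [hitWt, this]
  refine lt_of_lt_of_le ?_ (ENNReal.le_tsum 0)
  refine lt_of_lt_of_le ?_ (ENNReal.le_tsum Fin.elim0)
  rw [h]
  exact one_pos

lemma ofReal_rpow_ne_zero {x : ℝ} (hx : 0 < x) (a : ℝ) : ENNReal.ofReal (x ^ a) ≠ 0 := by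
  simpa using Real.rpow_pos_of_pos hx a

lemma hitGen_pos {x : ℝ} (hx : 0 < x) (E : V → V → Prop) (f : V → ℝ) (w : V)
    (hconn : ∀ u v : V, Relation.ReflTransGen E u v) (v : V) : 0 < hitGen E f w x v := by
  induction hconn v w using Relation.ReflTransGen.head_induction_on with
  | refl => exact hitGen_self_pos E f w x
  | @head a c hac _ ih =>
    by_cases ha : a = w
    · rw [ha]; exact hitGen_self_pos E f w x
    · refine lt_of_lt_of_le ?_ (hitGen_step hx E f w a ha)
      refine ENNReal.mul_pos (ofReal_rpow_ne_zero hx _) (ne_of_gt ?_)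
      refine lt_of_lt_of_le ?_ (ENNReal.le_tsum c)
      simpa [hac] using ih

/-- If `φ(x) < ∞`, then the successor sum of `hitGen` is finite at every vertex: finiteness at `w`
propagates forward along edges. -/
lemma succ_sum_ne_top {x : ℝ} (hx : 0 < x) (E : V → V → Prop) (f : V → ℝ) (w : V)
    (hconn : ∀ u v : V, Relation.ReflTransGen E u v) (hphi : phi E f w x ≠ ⊤) (v : V) :
    ∑' v', (if E v v' then hitGen E f w x v' else 0) ≠ ⊤ := by
  have key : ∀ (v : V) (B : ℝ≥0∞), B ≠ ⊤ →
      ENNReal.ofReal (x ^ f v) * ∑' v', (if E v v' then hitGen E f w x v' else 0) ≤ B →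
      ∑' v', (if E v v' then hitGen E f w x v' else 0) ≠ ⊤ := by
    intro v B hB h htop
    rw [htop, ENNReal.mul_top (ofReal_rpow_ne_zero hx _)] at h
    exact hB (top_le_iff.1 h)
  induction hconn w v with
  | refl => exact key w _ hphi (phi_step hx E f w)
  | @tail b c _ hbc ih =>
    by_cases hc : c = w
    · rw [hc]; exact key w _ hphi (phi_step hx E f w)
    · refine key c _ ?_ (hitGen_step hx E f w c hc)
      refine ne_top_of_le_ne_top ih (le_trans ?_ (ENNReal.le_tsum c))
      simp [hbc]

/-! ### Divergence at a zero of the determinant -/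

/-- If `U ≥ 0` satisfies `U ≤ U A` for a nonnegative kernel `A`, and a positive vector `R`
satisfies `A R ≤ R` on the support of `U`, then pairing with `R` gives `U = U A`, so the support of
`U` is closed under the transitions of `A`. -/
lemma support_closed {ι : Type*} [Fintype ι] (A : ι → ι → ℝ) (U R : ι → ℝ)
    (hA : ∀ i j, 0 ≤ A i j) (hU : ∀ i, 0 ≤ U i) (hR : ∀ i, 0 < R i)
    (hUA : ∀ j, U j ≤ ∑ i, U i * A i j)
    (hAR : ∀ i, U i ≠ 0 → ∑ j, A i j * R j ≤ R i)
    {i j : ι} (hi : U i ≠ 0) (hij : 0 < A i j) : U j ≠ 0 := by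
  have hterm : ∀ j ∈ Finset.univ, 0 ≤ (∑ i, U i * A i j - U j) * R j := fun j _ =>
    mul_nonneg (sub_nonneg.2 (hUA j)) (hR j).le
  have hsum : ∑ j, (∑ i, U i * A i j - U j) * R j ≤ 0 := by
    have h1 : ∑ j, (∑ i, U i * A i j - U j) * R j =
        ∑ i, U i * (∑ j, A i j * R j) - ∑ i, U i * R i := by
      simp_rw [sub_mul, Finset.sum_sub_distrib, Finset.sum_mul, Finset.mul_sum]
      rw [Finset.sum_comm]
      simp_rw [mul_assoc]
    rw [h1, sub_nonpos]
    refine Finset.sum_le_sum fun i _ => ?_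
    by_cases h : U i = 0
    · simp [h]
    · exact mul_le_mul_of_nonneg_left (hAR i h) (hU i)
  have hz := (Finset.sum_eq_zero_iff_of_nonneg hterm).1
    (le_antisymm hsum (Finset.sum_nonneg hterm)) j (Finset.mem_univ j)
  have hEq : ∑ i, U i * A i j = U j := by
    rcases mul_eq_zero.1 hz with h | h
    · linarith
    · exact absurd h (hR j).ne'
  rw [← hEq]
  refine ne_of_gt (lt_of_lt_of_le (mul_pos (lt_of_le_of_ne (hU i) hi.symm) hij) ?_)
  exact Finset.single_le_sum (f := fun i => U i * A i j)
    (fun i _ => mul_nonneg (hU i) (hA i j)) (Finset.mem_univ i)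

/-- The generating function `φ` diverges at every `x > 0` with all `α_i(x)` finite and
`det C(x) = 0`. -/
lemma phi_eq_top (E : V → V → Prop) (f : V → ℝ) (w : V)
    (m ℓ : ℕ) (hl : ℓ ≤ m) (P : Fin (m + 1) → Set V)
    (EH : Fin (m + 1) → Fin (m + 1) → Prop)
    (hconn : ∀ u v : V, Relation.ReflTransGen E u v)
    (hP0 : P 0 = {w})
    (hdisj : ∀ i j, i ≠ j → Disjoint (P i) (P j))
    (hcover : ∀ v, ∃ i, v ∈ P i)
    (hne : ∀ i, (P i).Nonempty)
    (hEH : ∀ i j, ∀ v ∈ P i, ∀ v' ∈ P j, (E v v' ↔ EH i j))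
    (x : ℝ) (hx : 0 < x)
    (hfin : ∀ i : Fin (m + 1), Summable fun v : P i => x ^ f v.1)
    (hdet : (Cmat f ℓ hl P EH x).det = 0) : phi E f w x = ⊤ := by
  by_contra hphi
  have hemb0 : ∀ i : Fin ℓ, embl ℓ hl i ≠ 0 := fun i h => by
    simpa [embl] using congrArg Fin.val h
  have hembinj : Function.Injective (embl ℓ hl) := fun i j h => by
    have := congrArg Fin.val h
    simp only [embl] at this
    exact Fin.ext (by omega)
  have hnw : ∀ i, i ≠ 0 → ∀ v ∈ P i, v ≠ w := by
    rintro i hi v hv rfl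
    exact Set.disjoint_left.1 (hdisj i 0 hi) hv (by simp [hP0])
  obtain ⟨u, hu0, hu⟩ := Matrix.exists_vecMul_eq_zero_iff.2 hdet
  obtain ⟨i₀, hi₀⟩ : ∃ i, u i ≠ 0 := by
    by_contra! h
    exact hu0 (funext h)
  have hw : ∀ i, i ≠ 0 → ∀ v ∈ P i, ∃ b, E b v := by
    intro i hi v hv
    rcases Relation.ReflTransGen.cases_tail (hconn w v) with h | ⟨b, _, hb⟩
    · exact absurd h (hnw i hi v hv)
    · exact ⟨b, hb⟩
  -- A predecessor exists also for `w`, because `w` is reachable from a vertex of a class `≠ {w}`.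
  have hpred : ∀ i, ∃ v ∈ P i, ∃ b, E b v := by
    intro i
    by_cases hi : i = 0
    · subst hi
      obtain ⟨v, hv⟩ := hne (embl ℓ hl i₀)
      refine ⟨w, by simp [hP0], ?_⟩
      rcases Relation.ReflTransGen.cases_tail (hconn v w) with h | ⟨b, _, hb⟩
      · exact absurd h.symm (hnw _ (hemb0 i₀) v hv)
      · exact ⟨b, hb⟩
    · obtain ⟨v, hv⟩ := hne i
      exact ⟨v, hv, hw i hi v hv⟩
  set g := hitGen E f w x with hg
  -- The class sums of `hitGen`, which are positive and finite.
  set H : Fin (m + 1) → ℝ≥0∞ := fun i => ∑' v : P i, g v with hH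
  have hHpos : ∀ i, H i ≠ 0 := by
    intro i
    obtain ⟨v, hv⟩ := hne i
    exact ne_of_gt (lt_of_lt_of_le (hitGen_pos hx E f w hconn v)
      (ENNReal.le_tsum (f := fun v : P i => g v) ⟨v, hv⟩))
  have hHfin : ∀ i, H i ≠ ⊤ := by
    intro i
    obtain ⟨v, hv, b, hb⟩ := hpred i
    obtain ⟨k, hk⟩ := hcover b
    refine ne_top_of_le_ne_top (succ_sum_ne_top hx E f w hconn hphi b) ?_
    simp only [hH]
    rw [tsum_subtype (P i) g]
    refine ENNReal.tsum_le_tsum fun v' => ?_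
    by_cases hv' : v' ∈ P i
    · have : E b v' := (hEH k i b hk v' hv').2 ((hEH k i b hk v hv).1 hb)
      simp [hv', this, hg]
    · simp [hv']
  have hsplit : ∀ i, ∀ v ∈ P i,
      ∑ j, (if EH i j then H j else 0) = ∑' v', (if E v v' then g v' else 0) := by
    intro i v hv
    have h1 : ∀ j, (if EH i j then H j else 0) =
        ∑' v', (P j).indicator (fun v' => if E v v' then g v' else 0) v' := by
      intro j
      rw [← _root_.tsum_subtype]
      split_ifs with h
      · refine tsum_congr fun v' => ?_
        rw [if_pos ((hEH i j v hv v' v'.2).2 h)]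
      · symm
        rw [ENNReal.tsum_eq_zero]
        intro v'
        rw [if_neg (fun h' => h ((hEH i j v hv v' v'.2).1 h'))]
    simp_rw [h1]
    rw [← Summable.tsum_finsetSum (fun _ _ => ENNReal.summable)]
    refine tsum_congr fun v' => ?_
    obtain ⟨k, hk⟩ := hcover v'
    rw [Finset.sum_eq_single k, Set.indicator_of_mem hk]
    · intro j _ hj
      exact Set.indicator_of_notMem (fun h => Set.disjoint_left.1 (hdisj j k hj) h hk) _
    · simp
  set a : Fin (m + 1) → ℝ := fun i => alphaR f (P i) x with ha
  have hapos : ∀ i, 0 < a i := by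
    intro i
    obtain ⟨v, hv⟩ := hne i
    exact (hfin i).tsum_pos (fun v => Real.rpow_nonneg hx.le _) ⟨v, hv⟩
      (Real.rpow_pos_of_pos hx _)
  have hrec : ∀ i, i ≠ 0 → ENNReal.ofReal (a i) * ∑ j, (if EH i j then H j else 0) ≤ H i := by
    intro i hi
    simp only [ha, alphaR]
    rw [ENNReal.ofReal_tsum_of_nonneg (fun v => Real.rpow_nonneg hx.le _) (hfin i),
      ← ENNReal.tsum_mul_right]
    refine ENNReal.tsum_le_tsum fun v => ?_
    rw [hsplit i v v.2]
    exact hitGen_step hx E f w v (hnw i hi v v.2)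
  set A : Fin (m + 1) → Fin (m + 1) → ℝ := fun i j => if EH i j then a i else 0 with hAdef
  set R : Fin (m + 1) → ℝ := fun i => (H i).toReal with hR
  have hAR : ∀ i, i ≠ 0 → ∑ j, A i j * R j ≤ R i := by
    intro i hi
    have h := ENNReal.toReal_mono (hHfin i) (hrec i hi)
    rw [ENNReal.toReal_mul, ENNReal.toReal_ofReal (hapos i).le, ENNReal.toReal_sum] at h
    · refine le_trans (le_of_eq ?_) h
      rw [Finset.mul_sum]
      refine Finset.sum_congr rfl fun j _ => ?_
      by_cases hij : EH i j <;> simp [hAdef, hR, hij]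
    · intro j _
      split_ifs
      · exact hHfin j
      · exact ENNReal.zero_ne_top
  -- The absolute value of the left eigenvector `u`, extended by zero to all classes.
  set U : Fin (m + 1) → ℝ := Function.extend (embl ℓ hl) (fun i => |u i|) 0 with hUdef
  have hUe : ∀ i, U (embl ℓ hl i) = |u i| := fun i => hembinj.extend_apply _ _ i
  have hUn : ∀ j, (¬ ∃ i, embl ℓ hl i = j) → U j = 0 := fun j h => by
    rw [hUdef, Function.extend_apply' _ _ _ h]; rfl
  have hU0 : U 0 = 0 := hUn 0 fun ⟨i, hi⟩ => hemb0 i hi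
  have hUnn : ∀ j, 0 ≤ U j := by
    intro j
    by_cases h : ∃ i, embl ℓ hl i = j
    · obtain ⟨i, rfl⟩ := h
      rw [hUe]; exact abs_nonneg _
    · rw [hUn j h]
  have hAnn : ∀ i j, 0 ≤ A i j := by
    intro i j
    simp only [hAdef]
    split_ifs
    · exact (hapos i).le
    · exact le_rfl
  have hUA : ∀ j, U j ≤ ∑ i, U i * A i j := by
    intro j
    by_cases h : ∃ i, embl ℓ hl i = j
    · obtain ⟨j, rfl⟩ := h
      have h1 : u j = ∑ i, u i * A (embl ℓ hl i) (embl ℓ hl j) := by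
        have := congrFun hu j
        simp only [Matrix.vecMul, dotProduct, Cmat, mul_sub, Finset.sum_sub_distrib,
          Pi.zero_apply] at this
        simp only [mul_ite, mul_one, mul_zero, Finset.sum_ite_eq', Finset.mem_univ,
          if_true] at this
        simp only [hAdef, ha, mul_ite, mul_zero]
        linarith
      calc U (embl ℓ hl j) = |∑ i, u i * A (embl ℓ hl i) (embl ℓ hl j)| := by
            rw [hUe, ← h1]
        _ ≤ ∑ i, |u i * A (embl ℓ hl i) (embl ℓ hl j)| := Finset.abs_sum_le_sum_abs _ _
        _ = ∑ i, U (embl ℓ hl i) * A (embl ℓ hl i) (embl ℓ hl j) := by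
            refine Finset.sum_congr rfl fun i _ => ?_
            rw [abs_mul, hUe, abs_of_nonneg (hAnn _ _)]
        _ = ∑ k ∈ Finset.univ.map ⟨embl ℓ hl, hembinj⟩, U k * A k (embl ℓ hl j) := by
            rw [Finset.sum_map]; rfl
        _ ≤ ∑ k, U k * A k (embl ℓ hl j) :=
            Finset.sum_le_sum_of_subset_of_nonneg (Finset.subset_univ _)
              fun k _ _ => mul_nonneg (hUnn k) (hAnn _ _)
    · rw [hUn j h]
      exact Finset.sum_nonneg fun i _ => mul_nonneg (hUnn i) (hAnn _ _)
  -- The classes supporting `U` cannot be left, yet `w` lies outside of them.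
  obtain ⟨v₀, hv₀⟩ := hne (embl ℓ hl i₀)
  have hreach : ∀ v, Relation.ReflTransGen E v₀ v → ∃ i, v ∈ P i ∧ U i ≠ 0 := by
    intro v hv
    induction hv with
    | refl => exact ⟨_, hv₀, by rw [hUe]; exact abs_ne_zero.2 hi₀⟩
    | @tail b c _ hbc ih =>
      obtain ⟨i, hbi, hUi⟩ := ih
      obtain ⟨j, hcj⟩ := hcover c
      refine ⟨j, hcj, support_closed A U R hAnn hUnn
        (fun i => ENNReal.toReal_pos (hHpos i) (hHfin i)) hUA
        (fun i hi => hAR i fun h => hi (h ▸ hU0)) hUi ?_⟩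
      simp only [hAdef]
      rw [if_pos ((hEH i j b hbi c hcj).1 hbc)]
      exact hapos i
  obtain ⟨i, hwi, hUi⟩ := hreach w (hconn v₀ w)
  exact hnw i (fun h => hUi (h ▸ hU0)) w hwi rfl

/-- If `x_C ≥ 0` is the smallest real number with `det C(x_C) = 0`
(all `α_i(x_C)` being finite), then `x_C ≥ r(φ_{G,f,w})`. -/
theorem stmt8 [Countable V] (E : V → V → Prop) (f : V → ℝ) (w : V)
    (m ℓ : ℕ) (hl1 : 1 ≤ ℓ) (hlm : ℓ < m) (P : Fin (m + 1) → Set V)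
    (EH : Fin (m + 1) → Fin (m + 1) → Prop)
    (hf : ∀ v, 0 < f v)
    (hconn : ∀ u v : V, Relation.ReflTransGen E u v)
    (hP0 : P 0 = {w})
    (hdisj : ∀ i j, i ≠ j → Disjoint (P i) (P j))
    (hcover : ∀ v, ∃ i, v ∈ P i)
    (hne : ∀ i, (P i).Nonempty)
    (hEH : ∀ i j, ∀ v ∈ P i, ∀ v' ∈ P j, (E v v' ↔ EH i j))
    (hVt : ∀ v : V, (∃ i : Fin ℓ, v ∈ P (embl ℓ hlm.le i)) ↔ (v ≠ w ∧ ∃ v', ¬ E v v'))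
    (xC : ℝ) (hxC0 : 0 ≤ xC)
    (hfin : ∀ i : Fin (m + 1), Summable fun v : P i => xC ^ f v.1)
    (hdet : (Cmat f ℓ hlm.le P EH xC).det = 0)
    (hmin : ∀ y : ℝ, 0 ≤ y → (∀ i : Fin (m + 1), Summable fun v : P i => y ^ f v.1) →
      (Cmat f ℓ hlm.le P EH y).det = 0 → xC ≤ y) :
    rPhi E f w ≤ xC := by
  have hxpos : 0 < xC := by
    refine lt_of_le_of_ne hxC0 fun h => ?_
    have hC : Cmat f ℓ hlm.le P EH xC = -1 := by
      ext i j
      have h0 : alphaR f (P (embl ℓ hlm.le i)) xC = 0 := by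
        simp [alphaR, ← h, Real.zero_rpow (hf _).ne']
      simp [Cmat, h0, Matrix.one_apply]
    rw [hC, Matrix.det_neg, Matrix.det_one, mul_one] at hdet
    exact pow_ne_zero _ (by norm_num) hdet
  refine Real.sSup_le ?_ hxC0
  rintro y ⟨_, hy⟩
  by_contra! hlt
  refine absurd (phi_eq_top E f w m ℓ hlm.le P EH hconn hP0 hdisj hcover hne hEH xC hxpos
    hfin hdet) (Summable.tsum_ofReal_ne_top ?_)
  refine Summable.of_nonneg_of_le (fun γ => Real.rpow_nonneg hxC0 _) (fun γ => ?_) hy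
  exact Real.rpow_le_rpow hxC0 hlt.le (Finset.sum_nonneg fun i _ => (hf _).le)
end

section
/- Assume r(F_{f,V}) > 0 and that either (1) there exists x ∈ (0, r(F_{f,V})) with det M(x) = 0, or (2) F_{f,V}(x) → ∞ as x → r(F_{f,V})⁻. Then there exists x₀ > 0 with φ_{G,f,w}(x₀) = 1, and such x₀ is unique. (By Savchenko's criterion this is exactly the condition ensuring that the special flow built over the Markov chain Y(G) with height function f has finite topological entropy −ln x₀ and a unique measure of maximal entropy.) -/
/-!
Write `B(x)` for the matrix `([EH i j] α_j(x))` on the classes other than `{w}`. Grouping simple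
`w`-cycles by the classes of their vertices gives `φ(x) = x^{f(w)} H_0(x)`, where the hitting sums
`H_i(x) ∈ [0,∞]` satisfy the first-step equation `H = [EH · 0] + B H` (`phi_eq`, `hitSum_eq`).

Strong connectedness makes all `H_i(x)` positive, and makes them and the `α_j(x)` uniformly bounded
on any set of `x`, bounded away from `0`, on which `φ ≤ 1` (`exists_bound`). Weighting the paths of
length `n` by a strictly increasing bounded sequence turns the first-step equation into a finite
strict subsolution `1 + B(x) σ < σ` (`exists_subsolution`). By continuity of the `α_j` below
`r(F_{f,V})`, the same `σ` is a subsolution slightly to the right of `x`, so `φ` is finite there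
(`phi_ne_top_of_subsolution`).

Suppose `φ` never takes the value `1`. By the intermediate value theorem, `φ > 1` can only happen
where `φ = ∞`; the set `{φ ≤ 1}` contains `0`, is closed by lower semicontinuity and open to the
right by the preceding paragraph, so `φ ≤ 1` on `[0, r(F_{f,V}))` (`phi_le_one_of_lt`). Then the
subsolution `σ` shows that `M(x)` has no left null vector (`det_ne_zero`), and the uniform bounds on
the `α_j` keep `F_{f,V}` bounded near `r(F_{f,V})` (`not_tendsto`); this contradicts both
alternatives of the hypothesis. Uniqueness is strict monotonicity of `φ` (`phi_lt_phi`).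
-/

open Classical Filter Topology Finset
open scoped ENNReal

universe u

variable {V : Type u}

/-! ### First-hitting paths and their class-level weights -/

/-- Total weight, summed over all paths with `n + 1` edges from a vertex `v` of class `i` that hit
`w` only at their end (the start excepted), of all path vertices but the last one and `v` itself.
It depends only on the class `i` of `v`; see `pathW_eq`. -/
noncomputable def hitW (f : V → ℝ) {m : ℕ} (P : Fin (m + 1) → Set V)
    (EH : Fin (m + 1) → Fin (m + 1) → Prop) (x : ℝ) : ℕ → Fin (m + 1) → ℝ≥0∞
  | 0, i => if EH i 0 then 1 else 0
  | n + 1, i => ∑ j : Fin m,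
      if EH i j.succ then alphaE f (P j.succ) x * hitW f P EH x n j.succ else 0

/-- The hitting weights summed over all lengths. -/
noncomputable def hitSum (f : V → ℝ) {m : ℕ} (P : Fin (m + 1) → Set V)
    (EH : Fin (m + 1) → Fin (m + 1) → Prop) (x : ℝ) (i : Fin (m + 1)) : ℝ≥0∞ :=
  ∑' n, hitW f P EH x n i

/-- `p` is a path with `n + 1` edges ending at `w` whose interior vertices differ from `w`; the
starting vertex is arbitrary. -/
def FirstHit (E : V → V → Prop) (w : V) (n : ℕ) (p : Fin (n + 2) → V) : Prop :=
  IsWalk E (n + 1) p ∧ p (Fin.last (n + 1)) = w ∧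
    ∀ i : Fin (n + 2), i ≠ 0 → i ≠ Fin.last (n + 1) → p i ≠ w

/-- `∑ x^{f*(p)}` over the first-hitting paths `p` with `n + 1` edges starting at `v`. -/
noncomputable def pathW (E : V → V → Prop) (f : V → ℝ) (w : V) (x : ℝ) (n : ℕ) (v : V) : ℝ≥0∞ :=
  ∑' γ : Fin (n + 1) → V,
    if FirstHit E w n (Fin.cons v γ) then ENNReal.ofReal (x ^ fStar f n (Fin.cons v γ)) else 0

lemma firstHit_zero (E : V → V → Prop) (w v : V) (γ : Fin 1 → V) :
    FirstHit E w 0 (Fin.cons v γ) ↔ E v w ∧ γ = fun _ => w := by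
  constructor
  · rintro ⟨h1, h2, -⟩
    have h3 : γ 0 = w := h2
    refine ⟨?_, ?_⟩
    · have h4 := h1 0
      simp at h4
      rwa [h3] at h4
    · funext i
      rw [Subsingleton.elim i 0, h3]
  · rintro ⟨h1, rfl⟩
    refine ⟨?_, rfl, ?_⟩
    · intro k
      rw [show k = 0 from Fin.ext (by have := k.isLt; simp only [Fin.val_zero]; omega)]
      simpa using h1
    · intro i h0 hl
      exfalso
      simp only [Ne, Fin.ext_iff, Fin.val_last, Fin.val_zero] at h0 hl
      omega

lemma firstHit_succ (E : V → V → Prop) (w v : V) (n : ℕ) (γ : Fin (n + 2) → V) :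
    FirstHit E w (n + 1) (Fin.cons v γ) ↔ E v (γ 0) ∧ γ 0 ≠ w ∧ FirstHit E w n γ := by
  constructor
  · rintro ⟨h1, h2, h3⟩
    refine ⟨?_, ?_, ?_, ?_, ?_⟩
    · simpa using h1 0
    · have := h3 1 (by simp) (by simp [Fin.ext_iff])
      simpa using this
    · intro k
      simpa using h1 k.succ
    · rw [← h2, ← Fin.succ_last (n + 1), Fin.cons_succ]
    · intro i _ hi
      have := h3 i.succ (Fin.succ_ne_zero i) (by rw [← Fin.succ_last]; simpa using hi)
      simpa using this
  · rintro ⟨h1, h2, h3, h4, h5⟩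
    refine ⟨?_, ?_, ?_⟩
    · intro k
      refine Fin.cases ?_ (fun k => ?_) k
      · simpa using h1
      · simpa using h3 k
    · rw [← Fin.succ_last, Fin.cons_succ, h4]
    · intro i
      refine Fin.cases (by simp) (fun i => ?_) i
      intro _ hl
      rw [Fin.cons_succ]
      by_cases hi : i = 0
      · rwa [hi]
      · exact h5 i hi (by rw [← Fin.succ_last] at hl; simpa using hl)

lemma fStar_pos {f : V → ℝ} (hf : ∀ v, 0 < f v) (n : ℕ) (γ : Fin (n + 2) → V) :
    0 < fStar f n γ :=
  Finset.sum_pos (fun _ _ => hf _) Finset.univ_nonempty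

lemma pathW_zero (E : V → V → Prop) (f : V → ℝ) (w : V) (x : ℝ) (v : V) :
    pathW E f w x 0 v = if E v w then ENNReal.ofReal (x ^ f v) else 0 := by
  unfold pathW
  rw [tsum_eq_single (fun _ => w)]
  · simp only [firstHit_zero, and_true]
    simp [fStar]
  · intro γ hγ
    rw [if_neg]
    rw [firstHit_zero]
    exact fun h => hγ h.2

lemma tsum_cons {n : ℕ} (F : (Fin (n + 1) → V) → ℝ≥0∞) :
    ∑' γ, F γ = ∑' u, ∑' δ : Fin n → V, F (Fin.cons u δ) := by
  rw [← (Fin.consEquiv (fun _ : Fin (n + 1) => V)).tsum_eq]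
  exact ENNReal.tsum_prod (f := fun u δ => F (Fin.cons u δ))

/-- Decomposition of a first-hitting path according to its second vertex. -/
lemma pathW_succ (E : V → V → Prop) {f : V → ℝ} (hf : ∀ v, 0 < f v) (w : V) {x : ℝ} (hx : 0 ≤ x)
    (n : ℕ) (v : V) :
    pathW E f w x (n + 1) v =
      ENNReal.ofReal (x ^ f v) * ∑' u, if E v u ∧ u ≠ w then pathW E f w x n u else 0 := by
  conv_lhs => unfold pathW
  rw [tsum_cons, ← ENNReal.tsum_mul_left]
  refine tsum_congr fun u => ?_
  simp only [firstHit_succ, Fin.cons_zero]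
  by_cases h : E v u ∧ u ≠ w
  · rw [if_pos h, pathW, ← ENNReal.tsum_mul_left]
    refine tsum_congr fun γ => ?_
    simp only [h.1, h.2, ne_eq, not_false_eq_true, true_and, mul_ite, mul_zero]
    congr 1
    rw [← ENNReal.ofReal_mul (Real.rpow_nonneg hx _),
      ← Real.rpow_add_of_nonneg hx (hf v).le (fStar_pos hf _ _).le]
    congr 2
    unfold fStar
    rw [Fin.sum_univ_succ]
    simp
  · rw [if_neg h, mul_zero, ENNReal.tsum_eq_zero]
    intro γ
    rw [if_neg]
    tauto

lemma phi_eq_tsum_pathW (E : V → V → Prop) (f : V → ℝ) (w : V) (x : ℝ) :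
    phi E f w x = ∑' n, pathW E f w x n w := by
  unfold phi
  rw [_root_.tsum_subtype (SimpleCycle E w)
    (fun p : Σ n : ℕ, Fin (n + 2) → V => ENNReal.ofReal (x ^ fStar f p.1 p.2)), ENNReal.tsum_sigma']
  refine tsum_congr fun n => ?_
  rw [tsum_cons, tsum_eq_single w]
  · refine tsum_congr fun γ => ?_
    simp only [Set.indicator_apply]
    refine if_congr ?_ rfl rfl
    simp [SimpleCycle, FirstHit]
  · intro u hu
    rw [ENNReal.tsum_eq_zero]
    intro γ
    rw [Set.indicator_of_notMem]
    rintro ⟨-, h, -⟩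
    exact hu (by simpa using h)

lemma tsum_eq_sum_classes {m : ℕ} {P : Fin (m + 1) → Set V}
    (hdisj : ∀ i j, i ≠ j → Disjoint (P i) (P j)) (hcover : ∀ v, ∃ i, v ∈ P i) (F : V → ℝ≥0∞) :
    ∑' v, F v = ∑ i, ∑' v : P i, F v := by
  simp_rw [_root_.tsum_subtype]
  rw [← Summable.tsum_finsetSum (fun _ _ => ENNReal.summable)]
  refine tsum_congr fun v => ?_
  obtain ⟨i, hi⟩ := hcover v
  rw [Finset.sum_eq_single i]
  · rw [Set.indicator_of_mem hi]
  · intro j _ hj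
    exact Set.indicator_of_notMem (fun h => (hdisj j i hj).le_bot ⟨h, hi⟩) _
  · simp

lemma pathW_eq {E : V → V → Prop} {f : V → ℝ} {w : V} {m : ℕ} {P : Fin (m + 1) → Set V}
    {EH : Fin (m + 1) → Fin (m + 1) → Prop} (hf : ∀ v, 0 < f v) (hP0 : P 0 = {w})
    (hdisj : ∀ i j, i ≠ j → Disjoint (P i) (P j)) (hcover : ∀ v, ∃ i, v ∈ P i)
    (hEH : ∀ i j, ∀ v ∈ P i, ∀ v' ∈ P j, (E v v' ↔ EH i j)) {x : ℝ} (hx : 0 ≤ x)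
    (n : ℕ) (i : Fin (m + 1)) (v : V) (hv : v ∈ P i) :
    pathW E f w x n v = ENNReal.ofReal (x ^ f v) * hitW f P EH x n i := by
  have hw : w ∈ P 0 := by simp [hP0]
  induction n generalizing i v with
  | zero =>
    rw [pathW_zero, hitW]
    simp [hEH i 0 v hv w hw]
  | succ n ih =>
    rw [pathW_succ E hf w hx, hitW]
    congr 1
    rw [tsum_eq_sum_classes hdisj hcover, Fin.sum_univ_succ]
    have h0 : ∑' u : P 0, (if E v u ∧ (u : V) ≠ w then pathW E f w x n u else 0) = 0 := by
      rw [ENNReal.tsum_eq_zero]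
      rintro ⟨u, hu⟩
      rw [hP0] at hu
      rw [if_neg]
      exact fun h => h.2 hu
    rw [h0, zero_add]
    refine Finset.sum_congr rfl fun j _ => ?_
    have hne : ∀ u : P j.succ, (u : V) ≠ w := by
      rintro ⟨u, hu⟩ rfl
      exact (hdisj _ _ (Fin.succ_ne_zero j)).le_bot ⟨hu, hw⟩
    by_cases h : EH i j.succ
    · rw [if_pos h, alphaE, ← ENNReal.tsum_mul_right]
      refine tsum_congr fun u => ?_
      rw [if_pos ⟨(hEH i j.succ v hv u u.2).2 h, hne u⟩, ih j.succ u u.2]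
    · rw [if_neg h, ENNReal.tsum_eq_zero]
      intro u
      rw [if_neg]
      exact fun h' => h ((hEH i j.succ v hv u u.2).1 h'.1)

/-- The generating function as a hitting sum: a simple `w`-cycle is a first-hitting path that
starts at `w`. -/
lemma phi_eq {E : V → V → Prop} {f : V → ℝ} {w : V} {m : ℕ} {P : Fin (m + 1) → Set V}
    {EH : Fin (m + 1) → Fin (m + 1) → Prop} (hf : ∀ v, 0 < f v) (hP0 : P 0 = {w})
    (hdisj : ∀ i j, i ≠ j → Disjoint (P i) (P j)) (hcover : ∀ v, ∃ i, v ∈ P i)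
    (hEH : ∀ i j, ∀ v ∈ P i, ∀ v' ∈ P j, (E v v' ↔ EH i j)) {x : ℝ} (hx : 0 ≤ x) :
    phi E f w x = ENNReal.ofReal (x ^ f w) * hitSum f P EH x 0 := by
  rw [phi_eq_tsum_pathW, hitSum, ← ENNReal.tsum_mul_left]
  exact tsum_congr fun n => pathW_eq hf hP0 hdisj hcover hEH hx n 0 w (by simp [hP0])

/-- The first-step equation `H = [EH · 0] + B H`, with `B_{ij} = [EH i j] α_j(x)`. -/
lemma hitSum_eq (f : V → ℝ) {m : ℕ} (P : Fin (m + 1) → Set V)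
    (EH : Fin (m + 1) → Fin (m + 1) → Prop) (x : ℝ) (i : Fin (m + 1)) :
    hitSum f P EH x i = (if EH i 0 then 1 else 0) +
      ∑ j : Fin m, if EH i j.succ then alphaE f (P j.succ) x * hitSum f P EH x j.succ else 0 := by
  conv_lhs => rw [hitSum, tsum_eq_zero_add' ENNReal.summable]
  simp only [hitW]
  congr 1
  rw [Summable.tsum_finsetSum (fun _ _ => ENNReal.summable)]
  refine Finset.sum_congr rfl fun j _ => ?_
  split_ifs
  · rw [ENNReal.tsum_mul_left, hitSum]
  · simp

lemma fSummable_of_lt {f : V → ℝ} (hf : ∀ v, 0 < f v) {x : ℝ} (hx : 0 ≤ x) (hxr : x < rF f) :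
    FSummable f x := by
  obtain ⟨y, ⟨hy0, hy⟩, hxy⟩ := exists_lt_of_lt_csSup
    (s := {x : ℝ | 0 ≤ x ∧ FSummable f x})
    ⟨0, le_refl 0, by simp [FSummable, Real.zero_rpow (hf _).ne', summable_zero]⟩ hxr
  exact Summable.of_nonneg_of_le (fun v => Real.rpow_nonneg hx _)
    (fun v => Real.rpow_le_rpow hx hxy.le (hf v).le) hy

lemma alphaE_mono {f : V → ℝ} (hf : ∀ v, 0 < f v) (S : Set V) {x y : ℝ} (hx : 0 ≤ x)
    (hxy : x ≤ y) : alphaE f S x ≤ alphaE f S y :=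
  ENNReal.tsum_le_tsum fun v => ENNReal.ofReal_le_ofReal (Real.rpow_le_rpow hx hxy (hf v).le)

lemma alphaR_nonneg (f : V → ℝ) (S : Set V) {x : ℝ} (hx : 0 ≤ x) : 0 ≤ alphaR f S x :=
  tsum_nonneg fun _ => Real.rpow_nonneg hx _

lemma alphaE_eq {f : V → ℝ} (S : Set V) {x : ℝ} (hx : 0 ≤ x) (h : FSummable f x) :
    alphaE f S x = ENNReal.ofReal (alphaR f S x) := by
  unfold alphaE alphaR
  rw [ENNReal.ofReal_tsum_of_nonneg (fun v => Real.rpow_nonneg hx _)]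
  exact h.subtype S

lemma alphaE_ne_zero (f : V → ℝ) {S : Set V} (hS : S.Nonempty) {x : ℝ} (hx : 0 < x) :
    alphaE f S x ≠ 0 := by
  obtain ⟨v, hv⟩ := hS
  intro h
  have := ENNReal.tsum_eq_zero.1 h ⟨v, hv⟩
  rw [ENNReal.ofReal_eq_zero] at this
  exact this.not_gt (Real.rpow_pos_of_pos hx _)

lemma continuousOn_alphaR {f : V → ℝ} (hf : ∀ v, 0 < f v) (S : Set V) {b : ℝ}
    (h : FSummable f b) : ContinuousOn (alphaR f S) (Set.Icc 0 b) := by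
  refine continuousOn_tsum (u := fun v : S => b ^ f v) ?_ (h.subtype S) ?_
  · exact fun v => (Real.continuous_rpow_const (hf v).le).continuousOn
  · intro v x hx
    rw [Real.norm_of_nonneg (Real.rpow_nonneg hx.1 _)]
    exact Real.rpow_le_rpow hx.1 hx.2 (hf v).le

lemma hitW_mono {f : V → ℝ} (hf : ∀ v, 0 < f v) {m : ℕ} (P : Fin (m + 1) → Set V)
    (EH : Fin (m + 1) → Fin (m + 1) → Prop) {x y : ℝ} (hx : 0 ≤ x) (hxy : x ≤ y) (n : ℕ)
    (i : Fin (m + 1)) : hitW f P EH x n i ≤ hitW f P EH y n i := by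
  induction n generalizing i with
  | zero => exact le_rfl
  | succ n ih =>
    refine Finset.sum_le_sum fun j _ => ?_
    split_ifs
    · exact mul_le_mul' (alphaE_mono hf _ hx hxy) (ih _)
    · exact le_rfl

lemma hitSum_mono {f : V → ℝ} (hf : ∀ v, 0 < f v) {m : ℕ} (P : Fin (m + 1) → Set V)
    (EH : Fin (m + 1) → Fin (m + 1) → Prop) {x y : ℝ} (hx : 0 ≤ x) (hxy : x ≤ y)
    (i : Fin (m + 1)) : hitSum f P EH x i ≤ hitSum f P EH y i :=
  ENNReal.tsum_le_tsum fun n => hitW_mono hf P EH hx hxy n i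

/-- One step along an edge of the quotient graph: one summand of `hitSum_eq`. -/
lemma alphaE_mul_hitSum_le (f : V → ℝ) {m : ℕ} (P : Fin (m + 1) → Set V)
    (EH : Fin (m + 1) → Fin (m + 1) → Prop) (x : ℝ) {i : Fin (m + 1)} {j : Fin m}
    (h : EH i j.succ) :
    alphaE f (P j.succ) x * hitSum f P EH x j.succ ≤ hitSum f P EH x i := by
  conv_rhs => rw [hitSum_eq]
  refine le_trans ?_ le_add_self
  refine le_trans ?_ (Finset.single_le_sum (f := fun j : Fin m =>
    if EH i j.succ then alphaE f (P j.succ) x * hitSum f P EH x j.succ else 0)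
    (fun _ _ => zero_le) (Finset.mem_univ j))
  rw [if_pos h]

section Graph

/-! ### Positivity and uniform bounds from strong connectedness -/

variable {E : V → V → Prop} {f : V → ℝ} {w : V} {m : ℕ} {P : Fin (m + 1) → Set V}
  {EH : Fin (m + 1) → Fin (m + 1) → Prop}

/-- Positivity of the hitting sums: `w` can be reached from every class. -/
lemma hitSum_ne_zero (hconn : ∀ u v : V, Relation.ReflTransGen E u v) (hP0 : P 0 = {w})
    (hcover : ∀ v, ∃ i, v ∈ P i) (hne : ∀ i, (P i).Nonempty)
    (hEH : ∀ i j, ∀ v ∈ P i, ∀ v' ∈ P j, (E v v' ↔ EH i j)) {x : ℝ} (hx : 0 < x)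
    (j : Fin m) (hj : Disjoint (P j.succ) (P 0)) : hitSum f P EH x j.succ ≠ 0 := by
  have hw : w ∈ P 0 := by simp [hP0]
  have key : ∀ v, v = w ∨ ∀ i, v ∈ P i → hitSum f P EH x i ≠ 0 := by
    intro v
    induction hconn v w using Relation.ReflTransGen.head_induction_on with
    | refl => exact Or.inl rfl
    | @head a c hac _ ih =>
      right
      intro i hi
      have hzero : EH i 0 → hitSum f P EH x i ≠ 0 := by
        intro h
        rw [hitSum_eq, if_pos h]
        simp
      rcases ih with rfl | ih
      · exact hzero ((hEH i 0 a hi c hw).1 hac)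
      · obtain ⟨k, hk⟩ := hcover c
        have hik := (hEH i k a hi c hk).1 hac
        rcases Fin.eq_zero_or_eq_succ k with rfl | ⟨k, rfl⟩
        · exact hzero hik
        · have := alphaE_mul_hitSum_le f P EH x hik
          intro h
          rw [h, nonpos_iff_eq_zero, mul_eq_zero] at this
          exact this.elim (alphaE_ne_zero f (hne _) hx) (ih _ hk)
  obtain ⟨v, hv⟩ := hne j.succ
  rcases key v with rfl | h
  · exact absurd hw (fun h => hj.le_bot ⟨hv, h⟩)
  · exact h _ hv

/-- If `φ ≤ 1` on a set `X` bounded away from `0`, the hitting sums and the functions `α_j` are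
uniformly bounded on `X`. Bounds on `hitSum` propagate along edges starting from `w`, since
`α_j(x) H_j(x) ≤ H_i(x)` and both factors are at least their positive values at `a`. -/
lemma exists_bound (hf : ∀ v, 0 < f v)
    (hconn : ∀ u v : V, Relation.ReflTransGen E u v) (hP0 : P 0 = {w})
    (hdisj : ∀ i j, i ≠ j → Disjoint (P i) (P j))
    (hcover : ∀ v, ∃ i, v ∈ P i) (hne : ∀ i, (P i).Nonempty)
    (hEH : ∀ i j, ∀ v ∈ P i, ∀ v' ∈ P j, (E v v' ↔ EH i j)) {a : ℝ} (ha : 0 < a)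
    {X : Set ℝ} (hX : ∀ x ∈ X, a ≤ x ∧ phi E f w x ≤ 1) (j : Fin m) :
    ∃ K : ℝ≥0∞, K ≠ ∞ ∧ ∀ x ∈ X, hitSum f P EH x j.succ ≤ K ∧ alphaE f (P j.succ) x ≤ K := by
  have hw : w ∈ P 0 := by simp [hP0]
  have hd : ∀ j : Fin m, Disjoint (P j.succ) (P 0) := fun j => hdisj _ _ (Fin.succ_ne_zero j)
  have step : ∀ (i : Fin (m + 1)) (j : Fin m), EH i j.succ →
      (∃ K : ℝ≥0∞, K ≠ ∞ ∧ ∀ x ∈ X, hitSum f P EH x i ≤ K) →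
      ∃ K : ℝ≥0∞, K ≠ ∞ ∧ ∀ x ∈ X, hitSum f P EH x j.succ ≤ K ∧ alphaE f (P j.succ) x ≤ K := by
    rintro i j hij ⟨K, hK, hKX⟩
    have hα := alphaE_ne_zero f (hne j.succ) ha
    have hh := hitSum_ne_zero (f := f) hconn hP0 hcover hne hEH ha j (hd j)
    refine ⟨max (K / alphaE f (P j.succ) a) (K / hitSum f P EH a j.succ),
      (max_lt (ENNReal.div_lt_top hK hα) (ENNReal.div_lt_top hK hh)).ne, fun x hx => ?_⟩
    have hle := (alphaE_mul_hitSum_le f P EH x hij).trans (hKX x hx)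
    have hax := (hX x hx).1
    constructor
    · refine le_trans ?_ (le_max_left _ _)
      rw [ENNReal.le_div_iff_mul_le (Or.inl hα) (Or.inr hK), mul_comm]
      exact (mul_le_mul' (alphaE_mono hf _ ha.le hax) le_rfl).trans hle
    · refine le_trans ?_ (le_max_right _ _)
      rw [ENNReal.le_div_iff_mul_le (Or.inl hh) (Or.inr hK)]
      exact (mul_le_mul' le_rfl (hitSum_mono hf P EH ha.le hax _)).trans hle
  have key : ∀ v, ∀ i, v ∈ P i → ∃ K : ℝ≥0∞, K ≠ ∞ ∧ ∀ x ∈ X, hitSum f P EH x i ≤ K := by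
    intro v
    have hbase : ∃ K : ℝ≥0∞, K ≠ ∞ ∧ ∀ x ∈ X, hitSum f P EH x 0 ≤ K := by
      have h0 : ENNReal.ofReal (a ^ f w) ≠ 0 := by
        rw [Ne, ENNReal.ofReal_eq_zero, not_le]
        exact Real.rpow_pos_of_pos ha _
      refine ⟨1 / ENNReal.ofReal (a ^ f w), ENNReal.div_ne_top ENNReal.one_ne_top h0,
        fun x hx => ?_⟩
      obtain ⟨hax, hφ⟩ := hX x hx
      rw [phi_eq hf hP0 hdisj hcover hEH (ha.le.trans hax)] at hφ
      rw [ENNReal.le_div_iff_mul_le (Or.inl h0) (Or.inr ENNReal.one_ne_top), mul_comm]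
      exact (mul_le_mul' (ENNReal.ofReal_le_ofReal
        (Real.rpow_le_rpow ha.le hax (hf w).le)) le_rfl).trans hφ
    induction hconn w v with
    | refl =>
      intro i hi
      have : i = 0 := by
        by_contra h
        exact (hdisj i 0 h).le_bot ⟨hi, hw⟩
      rwa [this]
    | @tail b c _ hbc ih =>
      intro i hi
      rcases Fin.eq_zero_or_eq_succ i with rfl | ⟨i, rfl⟩
      · exact hbase
      · obtain ⟨k, hk⟩ := hcover b
        obtain ⟨K, hK, h⟩ := step k i ((hEH k i.succ b hk c hi).1 hbc) (ih k hk)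
        exact ⟨K, hK, fun x hx => (h x hx).1⟩
  obtain ⟨v, hv⟩ := hne j.succ
  have hvw : v ≠ w := fun h => (hd j).le_bot ⟨hv, h ▸ hw⟩
  rcases Relation.ReflTransGen.cases_tail (hconn w v) with h | ⟨b, _, hbv⟩
  · exact absurd h hvw
  · obtain ⟨k, hk⟩ := hcover b
    exact step k j ((hEH k j.succ b hk v hv).1 hbv) (key b k hk)

/-! ### Subsolutions and finiteness of the generating function -/

/-- A strict subsolution: `φ(x) ≤ 1` yields a finite `σ ≥ 0` with `1 + B(x) σ < σ`, where
`B(x)_{ij} = [EH i j] α_j(x)`. -/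
lemma exists_subsolution (hf : ∀ v, 0 < f v)
    (hconn : ∀ u v : V, Relation.ReflTransGen E u v) (hP0 : P 0 = {w})
    (hdisj : ∀ i j, i ≠ j → Disjoint (P i) (P j))
    (hcover : ∀ v, ∃ i, v ∈ P i) (hne : ∀ i, (P i).Nonempty)
    (hEH : ∀ i j, ∀ v ∈ P i, ∀ v' ∈ P j, (E v v' ↔ EH i j)) {x : ℝ} (hx : 0 ≤ x)
    (hsum : FSummable f x) (hφ : phi E f w x ≤ 1) :
    ∃ σ : Fin m → ℝ, (∀ j, 0 ≤ σ j) ∧ ∀ i : Fin m,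
      1 + ∑ j : Fin m, (if EH i.succ j.succ then alphaR f (P j.succ) x * σ j else 0) < σ i := by
  rcases hx.eq_or_lt with rfl | hx0
  -- at `x = 0` all `α_j` vanish
  · refine ⟨fun _ => 2, fun _ => by norm_num, fun i => ?_⟩
    have h0 : ∀ S, alphaR f S 0 = 0 := fun S => by
      simp [alphaR, Real.zero_rpow (hf _).ne']
    simp [h0]
  have hfin : ∀ i : Fin m, hitSum f P EH x i.succ ≠ ∞ := by
    intro i
    obtain ⟨K, hK, h⟩ := exists_bound hf hconn hP0 hdisj hcover hne hEH hx0
      (X := {x}) (by rintro y rfl; exact ⟨le_rfl, hφ⟩) i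
    exact ((h x rfl).1.trans_lt hK.lt_top).ne
  have hpos : ∀ i : Fin m, hitSum f P EH x i.succ ≠ 0 := fun i =>
    hitSum_ne_zero hconn hP0 hcover hne hEH hx0 i (hdisj _ _ (Fin.succ_ne_zero i))
  -- Strictly increasing bounded weights `c n`: passing from `τ` to `B τ` shifts the hitting weights
  -- by one step, hence replaces `c n` by the strictly smaller `d n = c (n - 1)`, `d 0 = 0`.
  set c : ℕ → ℝ≥0∞ := fun n => ENNReal.ofReal (2 - (1 / 2) ^ n) with hc
  have hc2 : ∀ n, c n ≤ 2 := fun n => by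
    rw [hc, show (2 : ℝ≥0∞) = ENNReal.ofReal 2 by simp]
    exact ENNReal.ofReal_le_ofReal (by linarith [pow_pos (show (0 : ℝ) < 1 / 2 by norm_num) n])
  have hcs : ∀ n, c n < c (n + 1) := fun n => by
    have h1 := pow_pos (show (0 : ℝ) < 1 / 2 by norm_num) n
    have h2 : ((1 : ℝ) / 2) ^ n ≤ 1 := pow_le_one₀ (by norm_num) (by norm_num)
    rw [hc]
    refine (ENNReal.ofReal_lt_ofReal_iff ?_).2 ?_ <;> rw [pow_succ] <;> linarith
  set d : ℕ → ℝ≥0∞ := fun n => Nat.casesOn n 0 c with hd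
  have hdc : ∀ n, d n < c n := by
    rintro (_ | n)
    · simp [hd, hc]
    · exact hcs n
  set τ : Fin m → ℝ≥0∞ := fun i => ∑' n, c n * hitW f P EH x n i.succ with hτ
  have hτfin : ∀ i, τ i ≠ ∞ := fun i => by
    refine ne_top_of_le_ne_top (b := 2 * hitSum f P EH x i.succ)
      (ENNReal.mul_ne_top ENNReal.ofNat_ne_top (hfin i)) ?_
    rw [hitSum, ← ENNReal.tsum_mul_left]
    exact ENNReal.tsum_le_tsum fun n => mul_le_mul' (hc2 n) le_rfl
  have hlt : ∀ i : Fin m,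
      ∑ j : Fin m, (if EH i.succ j.succ then alphaE f (P j.succ) x * τ j else 0) < τ i := by
    intro i
    have h1 : ∑ j : Fin m, (if EH i.succ j.succ then alphaE f (P j.succ) x * τ j else 0)
        = ∑' n, d n * hitW f P EH x n i.succ := by
      have hd0 : d 0 = 0 := rfl
      have hds : ∀ n, d (n + 1) = c n := fun _ => rfl
      rw [tsum_eq_zero_add' ENNReal.summable]
      simp only [hd0, hds, zero_mul, zero_add, hitW, Finset.mul_sum]
      rw [Summable.tsum_finsetSum (fun _ _ => ENNReal.summable)]
      refine Finset.sum_congr rfl fun j _ => ?_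
      split_ifs
      · rw [hτ, ← ENNReal.tsum_mul_left]
        exact tsum_congr fun n => mul_left_comm _ _ _
      · simp
    obtain ⟨n, hn⟩ : ∃ n, hitW f P EH x n i.succ ≠ 0 := by
      by_contra! h
      exact hpos i (ENNReal.tsum_eq_zero.2 h)
    have hnt : hitW f P EH x n i.succ ≠ ∞ :=
      ne_top_of_le_ne_top (hfin i) (ENNReal.le_tsum n)
    rw [h1]
    refine ENNReal.tsum_lt_tsum (i := n) (h1 ▸ ?_) (fun k => mul_le_mul' (hdc k).le le_rfl) ?_
    · rw [h1]
      exact ne_top_of_le_ne_top (hτfin i)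
        (ENNReal.tsum_le_tsum fun k => mul_le_mul' (hdc k).le le_rfl)
    · exact (ENNReal.mul_lt_mul_iff_left hn hnt).2 (hdc n)
  set t : Fin m → ℝ := fun i => (τ i).toReal with ht
  have hltR : ∀ i : Fin m,
      ∑ j : Fin m, (if EH i.succ j.succ then alphaR f (P j.succ) x * t j else 0) < t i := by
    intro i
    rw [← ENNReal.ofReal_lt_ofReal_iff_of_nonneg, ENNReal.ofReal_sum_of_nonneg]
    · refine lt_of_eq_of_lt ?_ ((hlt i).trans_eq (ENNReal.ofReal_toReal (hτfin i)).symm)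
      refine Finset.sum_congr rfl fun j _ => ?_
      split_ifs
      · rw [alphaE_eq _ hx hsum, ENNReal.ofReal_mul (alphaR_nonneg _ _ hx),
          ENNReal.ofReal_toReal (hτfin j)]
      · simp
    · intro j _
      split_ifs
      · exact mul_nonneg (alphaR_nonneg _ _ hx) ENNReal.toReal_nonneg
      · exact le_rfl
    · refine Finset.sum_nonneg fun j _ => ?_
      split_ifs
      · exact mul_nonneg (alphaR_nonneg _ _ hx) ENNReal.toReal_nonneg
      · exact le_rfl
  -- Rescaling turns `B t < t` into `1 + B (C t) < C t`.
  set δ : Fin m → ℝ := fun i => t i -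
    ∑ j : Fin m, (if EH i.succ j.succ then alphaR f (P j.succ) x * t j else 0) with hδ
  have hδpos : ∀ i, 0 < δ i := fun i => sub_pos.2 (hltR i)
  set C : ℝ := ∑ i, 2 / δ i with hC
  have hC0 : 0 ≤ C := Finset.sum_nonneg fun i _ => (div_pos two_pos (hδpos i)).le
  refine ⟨fun i => C * t i, fun i => mul_nonneg hC0 ENNReal.toReal_nonneg, fun i => ?_⟩
  have h1 : 2 / δ i ≤ C := Finset.single_le_sum (f := fun i => 2 / δ i)
    (fun i _ => (div_pos two_pos (hδpos i)).le) (Finset.mem_univ i)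
  rw [div_le_iff₀ (hδpos i)] at h1
  have h2 : ∑ j : Fin m, (if EH i.succ j.succ then alphaR f (P j.succ) x * (C * t j) else 0)
      = C * (t i - δ i) := by
    rw [hδ, sub_sub_cancel, Finset.mul_sum]
    refine Finset.sum_congr rfl fun j _ => ?_
    split_ifs
    · ring
    · simp
  rw [h2]
  linarith

/-- Conversely, a vector with `1 + B(x) σ ≤ σ` dominates all partial sums of the hitting
weights, so `φ(x)` is finite. -/
lemma phi_ne_top_of_subsolution (hf : ∀ v, 0 < f v) (hP0 : P 0 = {w})
    (hdisj : ∀ i j, i ≠ j → Disjoint (P i) (P j)) (hcover : ∀ v, ∃ i, v ∈ P i)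
    (hEH : ∀ i j, ∀ v ∈ P i, ∀ v' ∈ P j, (E v v' ↔ EH i j)) {x : ℝ} (hx : 0 ≤ x)
    (hsum : FSummable f x) {σ : Fin m → ℝ} (hσ : ∀ j, 0 ≤ σ j) (h : ∀ i : Fin m,
      1 + ∑ j : Fin m, (if EH i.succ j.succ then alphaR f (P j.succ) x * σ j else 0) ≤ σ i) :
    phi E f w x ≠ ∞ := by
  have hpart : ∀ N, ∀ i : Fin m,
      ∑ n ∈ Finset.range N, hitW f P EH x n i.succ ≤ ENNReal.ofReal (σ i) := by
    intro N
    induction N with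
    | zero => simp
    | succ N ih =>
      intro i
      rw [Finset.sum_range_succ', add_comm]
      refine le_trans ?_ (ENNReal.ofReal_le_ofReal (h i))
      have hnn : ∀ j : Fin m,
          0 ≤ if EH i.succ j.succ then alphaR f (P j.succ) x * σ j else 0 := fun j => by
        split_ifs
        · exact mul_nonneg (alphaR_nonneg _ _ hx) (hσ j)
        · exact le_rfl
      rw [ENNReal.ofReal_add zero_le_one (Finset.sum_nonneg fun j _ => hnn j),
        ENNReal.ofReal_sum_of_nonneg fun j _ => hnn j]
      refine add_le_add ?_ ?_
      · rw [hitW, ENNReal.ofReal_one]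
        split_ifs <;> simp
      · simp only [hitW]
        rw [Finset.sum_comm]
        refine Finset.sum_le_sum fun j _ => ?_
        split_ifs
        · rw [← Finset.mul_sum, alphaE_eq _ hx hsum, ENNReal.ofReal_mul (alphaR_nonneg _ _ hx)]
          exact mul_le_mul' le_rfl (ih j)
        · simp
  have hH : ∀ i : Fin m, hitSum f P EH x i.succ ≤ ENNReal.ofReal (σ i) := fun i => by
    rw [hitSum, ENNReal.tsum_eq_iSup_nat]
    exact iSup_le fun N => hpart N i
  rw [phi_eq hf hP0 hdisj hcover hEH hx, hitSum_eq]
  refine ENNReal.mul_ne_top ENNReal.ofReal_ne_top (ENNReal.add_ne_top.2 ⟨?_, ?_⟩)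
  · split_ifs <;> simp
  · refine (ENNReal.sum_lt_top.2 fun j _ => ?_).ne
    split_ifs
    · rw [alphaE_eq _ hx hsum]
      exact ENNReal.mul_lt_top ENNReal.ofReal_lt_top ((hH j).trans_lt ENNReal.ofReal_lt_top)
    · simp

/-! ### Continuity, monotonicity and attaining the value one -/

lemma phi_zero (E : V → V → Prop) (hf : ∀ v, 0 < f v) (w : V) : phi E f w 0 = 0 := by
  simp [phi, Real.zero_rpow (fStar_pos hf _ _).ne']

/-- Intermediate value theorem for `φ` on an interval where it is finite. -/
lemma exists_phi_eq_one (hf : ∀ v, 0 < f v) {y : ℝ} (hy : 0 ≤ y) (hfin : phi E f w y ≠ ∞)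
    (h1 : 1 ≤ phi E f w y) : ∃ x, 0 < x ∧ phi E f w x = 1 := by
  have hsum : Summable fun γ : SimpleCycle E w => y ^ fStar f γ.1.1 γ.1.2 := by
    have := ENNReal.summable_toReal hfin
    refine this.congr fun γ => ?_
    rw [ENNReal.toReal_ofReal (Real.rpow_nonneg hy _)]
  have hle : ∀ x ∈ Set.Icc 0 y, ∀ γ : SimpleCycle E w,
      x ^ fStar f γ.1.1 γ.1.2 ≤ y ^ fStar f γ.1.1 γ.1.2 := fun x hx γ =>
    Real.rpow_le_rpow hx.1 hx.2 (fStar_pos hf _ _).le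
  have heq : ∀ x ∈ Set.Icc 0 y, phi E f w x = ENNReal.ofReal (phiR E f w x) := fun x hx => by
    rw [phi, phiR, ENNReal.ofReal_tsum_of_nonneg (fun _ => Real.rpow_nonneg hx.1 _)]
    exact Summable.of_nonneg_of_le (fun _ => Real.rpow_nonneg hx.1 _) (hle x hx) hsum
  have hcont : ContinuousOn (phiR E f w) (Set.Icc 0 y) := by
    refine continuousOn_tsum ?_ hsum ?_
    · exact fun γ => (Real.continuous_rpow_const (fStar_pos hf _ _).le).continuousOn
    · intro γ x hx
      rw [Real.norm_of_nonneg (Real.rpow_nonneg hx.1 _)]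
      exact hle x hx γ
  have h0 : phiR E f w 0 = 0 := by
    simp [phiR, Real.zero_rpow (fStar_pos hf _ _).ne']
  rw [heq y ⟨hy, le_rfl⟩, ENNReal.one_le_ofReal] at h1
  obtain ⟨x, hx, hx1⟩ := intermediate_value_Icc hy hcont ⟨h0.le.trans zero_le_one, h1⟩
  have hφ : phi E f w x = 1 := by rw [heq x hx, hx1, ENNReal.ofReal_one]
  refine ⟨x, hx.1.lt_of_ne ?_, hφ⟩
  rintro rfl
  rw [phi_zero E hf] at hφ
  exact zero_ne_one hφ

/-- Strict monotonicity of `φ`; the hypothesis `φ(y) ≠ 0` says that simple cycles exist. -/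
lemma phi_lt_phi (hf : ∀ v, 0 < f v) {x y : ℝ} (hx : 0 ≤ x) (hxy : x < y)
    (h0 : phi E f w y ≠ 0) (hfin : phi E f w x ≠ ∞) : phi E f w x < phi E f w y := by
  obtain ⟨γ, -⟩ : ∃ γ : SimpleCycle E w,
      ENNReal.ofReal (y ^ fStar f γ.1.1 γ.1.2) ≠ 0 := by
    by_contra! h
    exact h0 (ENNReal.tsum_eq_zero.2 h)
  refine ENNReal.tsum_lt_tsum (i := γ) hfin (fun γ => ENNReal.ofReal_le_ofReal
    (Real.rpow_le_rpow hx hxy.le (fStar_pos hf _ _).le)) ?_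
  exact (ENNReal.ofReal_lt_ofReal_iff (Real.rpow_pos_of_pos (hx.trans_lt hxy) _)).2
    (Real.rpow_lt_rpow hx hxy (fStar_pos hf _ _))

/-- `φ` is lower semicontinuous, being a sum of nonnegative continuous functions; no finiteness
is needed. -/
lemma isClosed_phi_le_one (E : V → V → Prop) (hf : ∀ v, 0 < f v) (w : V) :
    IsClosed {x | phi E f w x ≤ 1} := by
  have : LowerSemicontinuous (phi E f w) := by
    refine lowerSemicontinuous_tsum fun γ => Continuous.lowerSemicontinuous ?_
    exact ENNReal.continuous_ofReal.comp (Real.continuous_rpow_const (fStar_pos hf _ _).le)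
  exact this.isClosed_preimage 1

/-- If `φ` misses the value `1`, then `φ ≤ 1` on `[0, r(F))`: the set `{φ ≤ 1}` is closed, and it
is open to the right because a strict subsolution at `x` remains one slightly to the right of `x`. -/
lemma phi_le_one_of_lt (hf : ∀ v, 0 < f v)
    (hconn : ∀ u v : V, Relation.ReflTransGen E u v) (hP0 : P 0 = {w})
    (hdisj : ∀ i j, i ≠ j → Disjoint (P i) (P j))
    (hcover : ∀ v, ∃ i, v ∈ P i) (hne : ∀ i, (P i).Nonempty)
    (hEH : ∀ i j, ∀ v ∈ P i, ∀ v' ∈ P j, (E v v' ↔ EH i j))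
    (hno : ¬ ∃ x, 0 < x ∧ phi E f w x = 1) {b : ℝ} (hb : 0 ≤ b) (hbr : b < rF f) :
    phi E f w b ≤ 1 := by
  have hsub : Set.Icc 0 b ⊆ {x | phi E f w x ≤ 1} := by
    refine ((isClosed_phi_le_one E hf w).inter isClosed_Icc).Icc_subset_of_forall_exists_gt ?_ ?_
    · simp [phi_zero E hf]
    · rintro x ⟨hx1, hx0, hxb⟩ y hy
      have hsumb := fSummable_of_lt hf hb hbr
      obtain ⟨σ, hσ0, hσ⟩ := exists_subsolution hf hconn hP0 hdisj hcover hne hEH hx0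
        (fSummable_of_lt hf hx0 (hxb.trans hbr)) hx1
      have hev : ∀ᶠ z in 𝓝[>] x, ∀ i : Fin m,
          1 + ∑ j : Fin m, (if EH i.succ j.succ then alphaR f (P j.succ) z * σ j else 0)
            < σ i := by
        rw [eventually_all]
        intro i
        refine Tendsto.eventually_lt_const (hσ i) 
          (Tendsto.const_add _ (tendsto_finsetSum _ fun j _ => ?_))
        split_ifs
        · refine Tendsto.mul_const _ ?_
          rw [← nhdsWithin_Ioo_eq_nhdsGT hxb]
          exact ((continuousOn_alphaR hf (P j.succ) hsumb) x ⟨hx0, hxb.le⟩).mono_left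
            (nhdsWithin_mono _ fun z hz => ⟨hx0.trans hz.1.le, hz.2.le⟩)
        · exact tendsto_const_nhds
      obtain ⟨z, hz, hzy, hzb⟩ :=
        (hev.and (Filter.Eventually.and (Ioc_mem_nhdsGT (Set.mem_Ioi.1 hy))
          (Ioc_mem_nhdsGT hxb))).exists
      have hz0 : 0 ≤ z := hx0.trans hzy.1.le
      refine ⟨z, ?_, hzy⟩
      have hfin := phi_ne_top_of_subsolution hf hP0 hdisj hcover hEH hz0
        (fSummable_of_lt hf hz0 (hzb.2.trans_lt hbr)) hσ0 (fun i => (hz i).le)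
      by_contra hgt
      exact hno (exists_phi_eq_one hf hz0 hfin (not_le.1 hgt).le)
  exact hsub ⟨hb, le_rfl⟩

/-! ### The two criteria -/

/-- If `φ(x) ≤ 1`, then `M(x)` is invertible: for a left null vector `v`, pairing `|v|` with
`(α_i σ_i)_i`, where `σ` is a strict subsolution, gives `∑ |v_i| α_i ≤ 0`. -/
lemma det_ne_zero (hf : ∀ v, 0 < f v)
    (hconn : ∀ u v : V, Relation.ReflTransGen E u v) (hP0 : P 0 = {w})
    (hdisj : ∀ i j, i ≠ j → Disjoint (P i) (P j))
    (hcover : ∀ v, ∃ i, v ∈ P i) (hne : ∀ i, (P i).Nonempty)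
    (hEH : ∀ i j, ∀ v ∈ P i, ∀ v' ∈ P j, (E v v' ↔ EH i j)) {x : ℝ} (hx : 0 < x)
    (hxr : x < rF f) (hφ : phi E f w x ≤ 1) : (Mmat f P EH x).det ≠ 0 := by
  intro hdet
  have hsum := fSummable_of_lt hf hx.le hxr
  obtain ⟨σ, hσ0, hσ⟩ := exists_subsolution hf hconn hP0 hdisj hcover hne hEH hx.le hsum hφ
  obtain ⟨v, hv0, hv⟩ := Matrix.exists_vecMul_eq_zero_iff.2 hdet
  have hαpos : ∀ i : Fin m, 0 < alphaR f (P i.succ) x := fun i => by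
    have := alphaE_ne_zero f (hne i.succ) hx
    rw [alphaE_eq _ hx.le hsum, Ne, ENNReal.ofReal_eq_zero, not_le] at this
    exact this
  have hv' : ∀ j : Fin m,
      v j = ∑ i : Fin m, v i * (if EH i.succ j.succ then alphaR f (P i.succ) x else 0) := by
    intro j
    have h := congrFun hv j
    simp only [Matrix.vecMul, dotProduct, Mmat, mul_sub, Finset.sum_sub_distrib, mul_ite, mul_one,
      mul_zero, Finset.sum_ite_eq', Finset.mem_univ, if_true, Pi.zero_apply] at h
    simp only [mul_ite, mul_zero]
    linarith
  have habs : ∀ j : Fin m,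
      |v j| ≤ ∑ i : Fin m, |v i| * (if EH i.succ j.succ then alphaR f (P i.succ) x else 0) := by
    intro j
    conv_lhs => rw [hv' j]
    refine (Finset.abs_sum_le_sum_abs _ _).trans_eq (Finset.sum_congr rfl fun i _ => ?_)
    rw [abs_mul]
    congr 1
    split_ifs
    · exact abs_of_pos (hαpos i)
    · simp
  have hmain : ∑ j : Fin m, |v j| * (alphaR f (P j.succ) x * σ j) ≤
      ∑ i : Fin m, |v i| * alphaR f (P i.succ) x * (σ i - 1) := by
    calc ∑ j : Fin m, |v j| * (alphaR f (P j.succ) x * σ j)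
        ≤ ∑ j : Fin m, (∑ i : Fin m,
            |v i| * (if EH i.succ j.succ then alphaR f (P i.succ) x else 0)) *
              (alphaR f (P j.succ) x * σ j) :=
          Finset.sum_le_sum fun j _ => mul_le_mul_of_nonneg_right (habs j)
            (mul_nonneg (hαpos j).le (hσ0 j))
      _ = ∑ i : Fin m, |v i| * alphaR f (P i.succ) x * ∑ j : Fin m,
            (if EH i.succ j.succ then alphaR f (P j.succ) x * σ j else 0) := by
          simp only [Finset.sum_mul, Finset.mul_sum]
          rw [Finset.sum_comm]
          refine Finset.sum_congr rfl fun i _ => Finset.sum_congr rfl fun j _ => ?_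
          split_ifs
          · ring
          · simp
      _ ≤ _ := Finset.sum_le_sum fun i _ => mul_le_mul_of_nonneg_left
          (by linarith [hσ i]) (mul_nonneg (abs_nonneg _) (hαpos i).le)
  have hle : ∑ i : Fin m, |v i| * alphaR f (P i.succ) x ≤ 0 := by
    have : ∑ i : Fin m, |v i| * alphaR f (P i.succ) x * (σ i - 1) =
        ∑ j : Fin m, |v j| * (alphaR f (P j.succ) x * σ j) -
          ∑ i : Fin m, |v i| * alphaR f (P i.succ) x := by
      rw [← Finset.sum_sub_distrib]
      exact Finset.sum_congr rfl fun i _ => by ring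
    linarith
  have hnn : ∀ i ∈ Finset.univ, 0 ≤ |v i| * alphaR f (P i.succ) x := fun i _ =>
    mul_nonneg (abs_nonneg _) (hαpos i).le
  have hz := (Finset.sum_eq_zero_iff_of_nonneg hnn).1 (le_antisymm hle (Finset.sum_nonneg hnn))
  refine hv0 (funext fun i => ?_)
  have := hz i (Finset.mem_univ i)
  simpa [(hαpos i).ne'] using this

/-- If `φ ≤ 1` on `[0, r(F))`, then every `α_j` is bounded near `r(F)`, so `F_{f,V}` does not
tend to infinity there. -/
lemma not_tendsto (hf : ∀ v, 0 < f v)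
    (hconn : ∀ u v : V, Relation.ReflTransGen E u v) (hP0 : P 0 = {w})
    (hdisj : ∀ i j, i ≠ j → Disjoint (P i) (P j))
    (hcover : ∀ v, ∃ i, v ∈ P i) (hne : ∀ i, (P i).Nonempty)
    (hEH : ∀ i j, ∀ v ∈ P i, ∀ v' ∈ P j, (E v v' ↔ EH i j)) (hrF : 0 < rF f)
    (hφ : ∀ x, 0 ≤ x → x < rF f → phi E f w x ≤ 1) :
    ¬ Tendsto (fun x : ℝ => ∑' v : V, x ^ f v) (𝓝[<] rF f) atTop := by
  intro ht
  have ha : 0 < rF f / 2 := half_pos hrF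
  have har : rF f / 2 < rF f := half_lt_self hrF
  choose K hK hKX using exists_bound hf hconn hP0 hdisj hcover hne hEH ha
    (X := Set.Ico (rF f / 2) (rF f)) (fun x hx => ⟨hx.1, hφ x (ha.le.trans hx.1) hx.2⟩)
  set B : ℝ≥0∞ := ENNReal.ofReal (rF f ^ f w) + ∑ j, K j with hB
  have hBfin : B ≠ ∞ := ENNReal.add_ne_top.2
    ⟨ENNReal.ofReal_ne_top, (ENNReal.sum_lt_top.2 fun j _ => (hK j).lt_top).ne⟩
  have hbd : ∀ x ∈ Set.Ico (rF f / 2) (rF f), ∑' v : V, x ^ f v ≤ B.toReal := by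
    intro x hx
    have hx0 : 0 ≤ x := ha.le.trans hx.1
    rw [← ENNReal.ofReal_le_iff_le_toReal hBfin,
      ENNReal.ofReal_tsum_of_nonneg (fun _ => Real.rpow_nonneg hx0 _) (fSummable_of_lt hf hx0 hx.2),
      tsum_eq_sum_classes hdisj hcover, Fin.sum_univ_succ]
    refine add_le_add ?_ (Finset.sum_le_sum fun j _ => (hKX j x hx).2)
    rw [hP0, tsum_singleton w (fun v => ENNReal.ofReal (x ^ f v))]
    exact ENNReal.ofReal_le_ofReal (Real.rpow_le_rpow hx0 hx.2.le (hf w).le)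
  obtain ⟨x, hx1, hx2⟩ := ((ht.eventually_gt_atTop B.toReal).and (Ico_mem_nhdsLT har)).exists
  exact (hbd x hx2).not_gt hx1

end Graph

/-- If `r(F_{f,V}) > 0` and either `det M(x) = 0` for some
`x ∈ (0, r(F_{f,V}))`, or `F_{f,V}(x) → ∞` as `x → r(F_{f,V})⁻`, then there is a unique
`x₀ > 0` with `φ_{G,f,w}(x₀) = 1`. -/
theorem stmt14 [Countable V] (E : V → V → Prop) (f : V → ℝ) (w : V)
    (m : ℕ) (hm : 0 < m) (P : Fin (m + 1) → Set V)
    (EH : Fin (m + 1) → Fin (m + 1) → Prop)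
    (hf : ∀ v, 0 < f v)
    (hconn : ∀ u v : V, Relation.ReflTransGen E u v)
    (hP0 : P 0 = {w})
    (hdisj : ∀ i j, i ≠ j → Disjoint (P i) (P j))
    (hcover : ∀ v, ∃ i, v ∈ P i)
    (hne : ∀ i, (P i).Nonempty)
    (hEH : ∀ i j, ∀ v ∈ P i, ∀ v' ∈ P j, (E v v' ↔ EH i j))
    (hrF : 0 < rF f)
    (hcrit : (∃ x : ℝ, 0 < x ∧ x < rF f ∧ (Mmat f P EH x).det = 0) ∨
      Tendsto (fun x : ℝ => ∑' v : V, x ^ f v) (𝓝[<] rF f) atTop) :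
    ∃! x₀ : ℝ, 0 < x₀ ∧ phi E f w x₀ = 1 := by
  have hex : ∃ x, 0 < x ∧ phi E f w x = 1 := by
    by_contra hno
    have hφ : ∀ x, 0 ≤ x → x < rF f → phi E f w x ≤ 1 := fun x hx hxr =>
      phi_le_one_of_lt hf hconn hP0 hdisj hcover hne hEH hno hx hxr
    rcases hcrit with ⟨x, hx, hxr, hdet⟩ | ht
    · exact det_ne_zero hf hconn hP0 hdisj hcover hne hEH hx hxr (hφ x hx.le hxr) hdet
    · exact not_tendsto hf hconn hP0 hdisj hcover hne hEH hrF hφ ht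
  obtain ⟨x, hx, hx1⟩ := hex
  refine ⟨x, ⟨hx, hx1⟩, ?_⟩
  rintro y ⟨hy, hy1⟩
  rcases lt_trichotomy x y with h | h | h
  · have := phi_lt_phi (E := E) (w := w) hf hx.le h (by simp [hy1]) (by simp [hx1])
    rw [hx1, hy1] at this
    exact absurd this (lt_irrefl _)
  · exact h.symm
  · have := phi_lt_phi (E := E) (w := w) hf hy.le h (by simp [hx1]) (by simp [hy1])
    rw [hx1, hy1] at this
    exact absurd this (lt_irrefl _)
end
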